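/- Let Â = A + εB be an n×n dual matrix and suppose G is a group inverse of A (so A has index one). Then Â has a dual Moore–Penrose generalized inverse if and only if rank(A) equals the rank of the n×2n block matrix [A B(Iₙ − A·G)]. -/

import Mathlib

open Matrix

/-- The dual matrix `A + εB`, viewed as a matrix over the dual numbers `ℝ[ε]`. -/
def dm {n : ℕ} (A B : Matrix (Fin n) (Fin n) ℝ) :
    Matrix (Fin n) (Fin n) (DualNumber ℝ) :=
  fun i j => TrivSqZeroExt.inl (A i j) + TrivSqZeroExt.inr (B i j)

/-- A dual matrix has dual index one iff its column space equals that of its square,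
equivalently (as shown in the paper) there is a dual matrix `X` with `M² * X = M`. -/
def DualIndexOne {n : ℕ} (M : Matrix (Fin n) (Fin n) (DualNumber ℝ)) : Prop :=
  ∃ X : Matrix (Fin n) (Fin n) (DualNumber ℝ), M * M * X = M

/-- `G` is a group inverse of the real matrix `A`. -/
def IsGroupInv {n : ℕ} (A G : Matrix (Fin n) (Fin n) ℝ) : Prop :=
  A * G * A = A ∧ G * A * G = G ∧ A * G = G * A

/-- `X` is the Moore–Penrose inverse of the real matrix `A`. -/
def IsMoorePenrose {n : ℕ} (A X : Matrix (Fin n) (Fin n) ℝ) : Prop :=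
  A * X * A = A ∧ X * A * X = X ∧ (A * X)ᵀ = A * X ∧ (X * A)ᵀ = X * A

/-- `C` is a core inverse of the real matrix `A`. -/
def IsCoreInv {n : ℕ} (A C : Matrix (Fin n) (Fin n) ℝ) : Prop :=
  A * C * A = A ∧ A * (C * C) = C ∧ (A * C)ᵀ = A * C

/-- `G` is a dual group generalized inverse (DGGI) of the dual matrix `M`. -/
def IsDGGI {n : ℕ} (M G : Matrix (Fin n) (Fin n) (DualNumber ℝ)) : Prop :=
  M * G * M = M ∧ G * M * G = G ∧ M * G = G * M

/-- `X` is a dual Moore–Penrose generalized inverse (DMPGI) of the dual matrix `M`. -/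
def IsDMPGI {n : ℕ} (M X : Matrix (Fin n) (Fin n) (DualNumber ℝ)) : Prop :=
  M * X * M = M ∧ X * M * X = X ∧ (M * X)ᵀ = M * X ∧ (X * M)ᵀ = X * M

/-- `G` is a dual core generalized inverse (DCGI) of the dual matrix `M`. -/
def IsDCGI {n : ℕ} (M G : Matrix (Fin n) (Fin n) (DualNumber ℝ)) : Prop :=
  M * G * M = M ∧ M * (G * G) = G ∧ (M * G)ᵀ = M * G


lemma aux_unit {n : ℕ} (K : Matrix (Fin n) (Fin n) (DualNumber ℝ)) : IsUnit (1 + Kᵀ * K) := by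
  rw [Matrix.isUnit_iff_isUnit_det, TrivSqZeroExt.isUnit_iff_isUnit_fst]
  have h : (1 + Kᵀ * K).det.fst =
      (1 + (K.map TrivSqZeroExt.fst)ᵀ * (K.map TrivSqZeroExt.fst) : Matrix (Fin n) (Fin n) ℝ).det := by
    have := (TrivSqZeroExt.fstHom ℝ ℝ ℝ).toRingHom.map_det (1 + Kᵀ * K)
    refine Eq.trans this ?_
    congr 1
    rw [map_add, map_mul, map_one]
    rfl
  rw [h]
  set L := K.map TrivSqZeroExt.fst
  have hp : (1 + Lᵀ * L).PosDef := by
    have := Matrix.posSemidef_conjTranspose_mul_self L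
    rw [Matrix.conjTranspose_eq_transpose_of_trivial] at this
    exact Matrix.PosDef.one.add_posSemidef this
  exact (isUnit_iff_ne_zero.mpr hp.det_pos.ne')

/-- Symmetric projection with the same range as an idempotent. -/
lemma aux_proj {n : ℕ} (e : Matrix (Fin n) (Fin n) (DualNumber ℝ)) (he : e * e = e) :
    ∃ p : Matrix (Fin n) (Fin n) (DualNumber ℝ), pᵀ = p ∧ p * e = e ∧ e * p = p := by
  have hu := aux_unit (eᵀ - e)
  have he' : eᵀ * eᵀ = eᵀ := by rw [← Matrix.transpose_mul, he]
  obtain ⟨z, hz⟩ := hu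
  have hz1 : (z : Matrix (Fin n) (Fin n) (DualNumber ℝ)) = 1 - e - eᵀ + e * eᵀ + eᵀ * e := by
    rw [hz, Matrix.transpose_sub, Matrix.transpose_transpose]
    simp only [sub_mul, mul_sub, he, he']
    abel
  have c1 : Commute (z : Matrix (Fin n) (Fin n) (DualNumber ℝ)) e := by
    rw [hz1]; unfold Commute SemiconjBy
    simp only [sub_mul, mul_sub, add_mul, mul_add, he, one_mul, mul_one, mul_assoc]
    simp only [← mul_assoc, he]
    abel
  have c2 : Commute (z : Matrix (Fin n) (Fin n) (DualNumber ℝ)) eᵀ := by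
    rw [hz1]; unfold Commute SemiconjBy
    simp only [sub_mul, mul_sub, add_mul, mul_add, he', one_mul, mul_one, mul_assoc]
    simp only [← mul_assoc, he']
    abel
  have hze : (z : Matrix (Fin n) (Fin n) (DualNumber ℝ)) * e = e * eᵀ * e := by
    rw [hz1]
    simp only [sub_mul, add_mul, he, one_mul, mul_assoc]
    abel
  have hzt : (z : Matrix (Fin n) (Fin n) (DualNumber ℝ))ᵀ = z := by
    rw [hz1]; simp only [transpose_add, transpose_sub, transpose_mul, transpose_transpose, transpose_one]
    abel
  set w : Matrix (Fin n) (Fin n) (DualNumber ℝ) := ((z⁻¹ : (Matrix (Fin n) (Fin n) (DualNumber ℝ))ˣ) : Matrix (Fin n) (Fin n) (DualNumber ℝ)) with hw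
  have d1 : Commute w e := c1.units_inv_left
  have d2 : Commute w eᵀ := c2.units_inv_left
  have wz : w * z = 1 := z.inv_mul
  have zw : (z : Matrix (Fin n) (Fin n) (DualNumber ℝ)) * w = 1 := z.mul_inv
  have hwt : wᵀ = w := by
    have h1 : wᵀ * z = 1 := by rw [← hzt, ← transpose_mul, zw, transpose_one]
    calc wᵀ = wᵀ * (z * w) := by rw [zw, mul_one]
      _ = w := by rw [← mul_assoc, h1, one_mul]
  refine ⟨w * (e * eᵀ), ?_, ?_, ?_⟩
  · rw [transpose_mul, transpose_mul, transpose_transpose, hwt]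
    exact (d1.mul_right d2).eq.symm
  · rw [mul_assoc, ← hze, ← mul_assoc, wz, one_mul]
  · rw [← mul_assoc, ← d1.eq, mul_assoc, ← mul_assoc e e, he]

lemma aux_mp {n : ℕ} (M Y : Matrix (Fin n) (Fin n) (DualNumber ℝ)) (h : M * Y * M = M) :
    ∃ X, IsDMPGI M X := by
  obtain ⟨p, p1, p2, p3⟩ := aux_proj (M * Y) (by rw [← mul_assoc, h])
  obtain ⟨q', q1, q2, q3⟩ := aux_proj ((Y * M)ᵀ) (by
    rw [← transpose_mul]; congr 1; rw [mul_assoc, ← mul_assoc M, h])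
  have r2 : (Y * M) * q' = Y * M := by
    have := congrArg transpose q2
    rwa [transpose_mul, transpose_transpose, q1] at this
  have r3 : q' * (Y * M) = q' := by
    have := congrArg transpose q3
    rwa [transpose_mul, transpose_transpose, q1] at this
  have hMq : M * q' = M := by
    calc M * q' = M * ((Y * M) * q') := by rw [← mul_assoc, ← mul_assoc, h]
      _ = M := by rw [r2, ← mul_assoc, h]
  have hpM : p * M = M := by
    calc p * M = p * (M * Y) * M := by rw [mul_assoc, h]
      _ = M := by rw [p2, h]
  have hMX : M * (q' * Y * p) = p := by
    rw [← mul_assoc, ← mul_assoc, hMq, p3]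
  have hXM : q' * Y * p * M = q' := by
    rw [mul_assoc, hpM, mul_assoc, r3]
  have hqq : q' * q' = q' := by
    calc q' * q' = q' * (Y * M) * q' := by rw [r3]
      _ = q' := by rw [mul_assoc, r2, r3]
  refine ⟨q' * Y * p, ?_, ?_, ?_, ?_⟩
  · rw [hMX, hpM]
  · rw [hXM, ← mul_assoc, ← mul_assoc, hqq]
  · rw [hMX, p1]
  · rw [hXM, q1]

lemma aux_mul {n : ℕ} (A B C D : Matrix (Fin n) (Fin n) ℝ) :
    dm A B * dm C D = dm (A * C) (A * D + B * C) := by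
  ext i j
  · simp [dm, Matrix.mul_apply, TrivSqZeroExt.fst_sum]
  · simp [dm, Matrix.mul_apply, TrivSqZeroExt.snd_sum, Finset.sum_add_distrib, mul_comm]

lemma aux_inj {n : ℕ} {A B C D : Matrix (Fin n) (Fin n) ℝ} (h : dm A B = dm C D) :
    A = C ∧ B = D := by
  constructor
  · ext i j
    simpa [dm] using congrArg TrivSqZeroExt.fst (congrFun (congrFun h i) j)
  · ext i j
    simpa [dm] using congrArg TrivSqZeroExt.snd (congrFun (congrFun h i) j)

lemma aux_surj {n : ℕ} (X : Matrix (Fin n) (Fin n) (DualNumber ℝ)) :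
    X = dm (X.map TrivSqZeroExt.fst) (X.map TrivSqZeroExt.snd) := by
  ext i j <;> simp [dm]

theorem stmt6 {n : ℕ} (A B G : Matrix (Fin n) (Fin n) ℝ)
    (hG : IsGroupInv A G) :
    (∃ X : Matrix (Fin n) (Fin n) (DualNumber ℝ), IsDMPGI (dm A B) X) ↔
      A.rank = (Matrix.fromCols A (B * (1 - A * G))).rank := by
  obtain ⟨g1, g2, g3⟩ := hG
  have hA1 : A = fromCols A (B * (1 - A * G)) * (fromRows 1 0 : Matrix (Fin n ⊕ Fin n) (Fin n) ℝ) := by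
    rw [fromCols_mul_fromRows]; simp
  have hAP : A * (1 - A * G) = 0 := by
    rw [mul_sub, mul_one, g3, ← mul_assoc, g1, sub_self]
  constructor
  · rintro ⟨X, hX, -⟩
    rw [aux_surj X, aux_mul, aux_mul] at hX
    obtain ⟨-, h2⟩ := aux_inj hX
    set X0 := X.map TrivSqZeroExt.fst
    set X1 := X.map TrivSqZeroExt.snd
    have h3 : B * (1 - A * G) = A * (X0 * B * (1 - A * G)) := by
      conv_lhs => rw [← h2]
      rw [add_mul, mul_assoc _ A, hAP, mul_zero, add_zero]
      simp only [mul_assoc]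
    apply le_antisymm
    · conv_lhs => rw [hA1]
      exact rank_mul_le_left _ _
    · rw [h3]
      have : fromCols A (A * (X0 * B * (1 - A * G))) = A * fromCols 1 (X0 * B * (1 - A * G)) := by
        rw [mul_fromCols, mul_one]
      rw [this]
      exact rank_mul_le_left _ _
  · intro hr
    have hle : LinearMap.range A.mulVecLin ≤
        LinearMap.range (fromCols A (B * (1 - A * G))).mulVecLin := by
      conv_lhs => rw [hA1]
      rw [mulVecLin_mul]
      exact LinearMap.range_comp_le_range _ _
    have heq := Submodule.eq_of_le_of_finrank_eq hle hr
    have h1 : A * G * (B * (1 - A * G)) = B * (1 - A * G) := by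
      apply Matrix.ext_of_mulVec_single
      intro i
      have : (B * (1 - A * G)) *ᵥ Pi.single i 1 ∈ LinearMap.range A.mulVecLin := by
        rw [heq]
        refine ⟨Sum.elim 0 (Pi.single i 1), ?_⟩
        rw [mulVecLin_apply, fromCols_mulVec, Sum.elim_comp_inl, Sum.elim_comp_inr, mulVec_zero,
          zero_add]
      obtain ⟨u, hu⟩ := this
      rw [mulVecLin_apply] at hu
      rw [← mulVec_mulVec, ← hu, mulVec_mulVec, g1]
    apply aux_mp _ (dm G (-(G * B * G)))
    rw [aux_mul, aux_mul, g1]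
    congr 1
    have h4 : B * (1 - A * G) = B - B * G * A := by rw [g3]; noncomm_ring
    rw [h4] at h1
    have h5 : A * G * B - A * G * B * G * A = B - B * G * A := by
      rw [← h1]; noncomm_ring
    have : A * G * B + (A * -(G * B * G) + B * G) * A
      = (A * G * B - A * G * B * G * A) + B * G * A := by noncomm_ring
    rw [this, h5]; abel
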